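/- Let K be a number field and let R be a sieve in residue form for K. Assume there is a finite subset T ⊆ 𝓞_K such that for every nonzero prime ideal 𝔭 and every x ∈ 𝓞_K with x ∈ R_𝔭 there exists t ∈ T with x − t ∈ 𝔭², and assume that for every 𝔭 the set R_𝔭 does not contain all residue classes of 𝓞_K/𝔭^{k(𝔭)}. Then for every finite set Ω of nonzero prime ideals of 𝓞_K, every integer m ≥ 0, and every family (x_𝔭)_{𝔭∈Ω} of elements of 𝓞_K with x_𝔭 ∉ R_𝔭 for all 𝔭 ∈ Ω, there exists y ∈ V(K,R) with y ≡ x_𝔭 (mod 𝔭^m) for all 𝔭 ∈ Ω. -/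

import Mathlib

open NumberField

/-- A sieve in residue form for a number field `K`: for every (prime) ideal `P` of
`𝓞 K`, an exponent `k P ≥ 1` and a set `R P` of residue classes in `𝓞 K ⧸ P ^ k P`. -/
structure ResidueSieve (K : Type*) [Field K] [NumberField K] where
  k : Ideal (𝓞 K) → ℕ
  k_pos : ∀ P : Ideal (𝓞 K), 1 ≤ k P
  R : (P : Ideal (𝓞 K)) → Set (𝓞 K ⧸ P ^ k P)

/-- `x ∈ R_𝔭`: the residue class of `x` modulo `𝔭^{k(𝔭)}` belongs to `R 𝔭`. -/
def ResidueSieve.Mem {K : Type*} [Field K] [NumberField K] (S : ResidueSieve K)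
    (P : Ideal (𝓞 K)) (x : 𝓞 K) : Prop :=
  Ideal.Quotient.mk (P ^ S.k P) x ∈ S.R P

/-- `V(K,R)`: the set of integers of `K` avoiding the sieve at every nonzero prime. -/
def ResidueSieve.V {K : Type*} [Field K] [NumberField K] (S : ResidueSieve K) :
    Set (𝓞 K) :=
  {x | ∀ P : Ideal (𝓞 K), P.IsPrime → P ≠ ⊥ → ¬ S.Mem P x}

/-
The Chinese remainder theorem gives an `a` with the right local behaviour at the finitely many
primes dividing some `M`, and every `a + M z` inherits it, so only the conditions
`a + M z - t ∉ 𝔭²` for `t ∈ T` and `𝔭 ∤ M` remain. Let `z` run over a box of `N ^ d` points,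
`d = [K : ℚ]`. By pigeonhole on small cells, `a + M z - t ∈ 𝔭²` for at most
`O(N ^ d / N(𝔭)² + 1)` of them, and, apart from the single `z` with `a + M z = t`, only when
`N(𝔭)² = O(N ^ d)`. Only `O(N ^ (d / 2))` primes satisfy the latter, so the terms `+ 1` are
negligible; since `∑ N(𝔭)⁻²` converges, the main terms sum to less than `N ^ d / (#T + 1)` once `M`
is divisible by a suitable finite set of primes. This set depends only on `K` and `#T`, not on `M`
or `a`, so `M` may be chosen after it.
-/

section IdealCounting

open Asymptotics Filter IsDedekindDomain

variable (K : Type*) [Field K] [NumberField K]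

theorem card_absNorm_le_isBigO :
    (fun y : ℝ ↦ (Nat.card {I : Ideal (𝓞 K) // (Ideal.absNorm I : ℝ) ≤ y} : ℝ)) =O[atTop]
      fun y ↦ y :=
  isBigO_of_div_tendsto_nhds ((eventually_ne_atTop 0).mono fun _ hy h ↦ absurd h hy) _
    (Ideal.tendsto_norm_le_div_atTop K)

theorem card_absNorm_sq_le_isLittleO :
    (fun y : ℝ ↦ (Nat.card {I : Ideal (𝓞 K) // (Ideal.absNorm I : ℝ) ^ 2 ≤ y} : ℝ)) =o[atTop]
      fun y ↦ y := by
  have hcard : (fun y : ℝ ↦ (Nat.card {I : Ideal (𝓞 K) // (Ideal.absNorm I : ℝ) ^ 2 ≤ y} : ℝ))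
      =O[atTop] Real.sqrt := by
    refine ((card_absNorm_le_isBigO K).comp_tendsto Real.tendsto_sqrt_atTop).congr' ?_ .rfl
    filter_upwards [eventually_ge_atTop 0] with y hy
    simp only [Function.comp_apply, Real.le_sqrt (Nat.cast_nonneg _) hy]
  have hsqrt : Real.sqrt =o[atTop] fun y : ℝ ↦ y := by
    refine (isLittleO_iff_tendsto' ((eventually_ne_atTop 0).mono fun _ hy h ↦ absurd h hy)).mpr ?_
    simpa only [Real.sqrt_div_self, Function.comp_def] using
      tendsto_inv_atTop_zero.comp Real.tendsto_sqrt_atTop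
  exact hcard.trans_isLittleO hsqrt

theorem lseriesSummable_card_absNorm_eq {s : ℂ} (hs : 1 < s.re) :
    LSeriesSummable (fun n ↦ (Nat.card {I : Ideal (𝓞 K) // Ideal.absNorm I = n} : ℂ)) s := by
  have hle (n : ℕ) : ∑ k ∈ Finset.Icc 1 n, Nat.card {I : Ideal (𝓞 K) // Ideal.absNorm I = k} ≤
      Nat.card {I : Ideal (𝓞 K) // (Ideal.absNorm I : ℝ) ≤ n} := by
    rw [← Finset.card_preimage_eq_sum_card_image_eq
      fun k _ ↦ Ideal.finite_setOfPred_absNorm_eq (S := 𝓞 K) k]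
    simp only [Nat.cast_le]
    exact Nat.card_mono (Ideal.finite_setOfPred_absNorm_le n) fun _ hI ↦
      (Finset.mem_Icc.mp (Set.mem_preimage.mp hI)).2
  refine LSeriesSummable_of_sum_norm_bigO_and_nonneg
    (f := fun n ↦ Nat.card {I : Ideal (𝓞 K) // Ideal.absNorm I = n}) ?_
    (fun _ ↦ Nat.cast_nonneg _) zero_le_one hs
  simp only [Real.rpow_one]
  refine .trans (.of_norm_le fun n ↦ ?_)
    ((card_absNorm_le_isBigO K).comp_tendsto tendsto_natCast_atTop_atTop)
  rw [Real.norm_of_nonneg (by positivity), ← Nat.cast_sum]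
  exact Nat.cast_le.mpr (hle n)

-- The zero ideal contributes `0`, since `(0 : ℝ) ^ (-s) = 0`.
theorem summable_absNorm_rpow {s : ℝ} (hs : 1 < s) :
    Summable fun I : Ideal (𝓞 K) ↦ (Ideal.absNorm I : ℝ) ^ (-s) := by
  refine (summable_partition (s := fun n : ℕ ↦ {I | Ideal.absNorm I = n})
    (fun _ ↦ by positivity) fun I ↦ existsUnique_eq').mpr ⟨fun n ↦ ?_, ?_⟩
  · have := (Ideal.finite_setOfPred_absNorm_eq (S := 𝓞 K) n).to_subtype
    exact .of_finite
  · refine (lseriesSummable_card_absNorm_eq K (s := s) (by simpa using hs)).norm.congr fun n ↦ ?_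
    rw [LSeries.norm_term_eq, tsum_congr fun I ↦ by rw [I.2], tsum_const, nsmul_eq_mul]
    rcases eq_or_ne n 0 with rfl | hn
    · simp [Real.zero_rpow (by linarith : -s ≠ 0)]
    · simp only [hn, if_false, Complex.norm_natCast, Complex.ofReal_re,
        Real.rpow_neg (Nat.cast_nonneg _), div_eq_mul_inv]
      rfl

end IdealCounting

section Box

variable {A ι : Type*} [CommRing A] [Fintype ι] [DecidableEq ι] (b : Module.Basis ι ℤ A)

/-- The box of elements of `A` whose coordinates in the `ℤ`-basis `b` all lie in `[0, N)`. -/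
noncomputable def coordBox (N : ℕ) : Finset A :=
  (Fintype.piFinset fun _ : ι ↦ Finset.Ico (0 : ℤ) N).map b.equivFun.symm.toEquiv.toEmbedding

variable {b} {N : ℕ}

theorem mem_coordBox {x : A} : x ∈ coordBox b N ↔ ∀ i, 0 ≤ b.repr x i ∧ b.repr x i < N := by
  simp [coordBox, Finset.mem_map_equiv]

variable (b N) in
theorem card_coordBox : (coordBox b N).card = N ^ Fintype.card ι := by
  simp [coordBox]

theorem exists_forall_abs_repr_add_mul_lt (b : Module.Basis ι ℤ A) (u M : A) :
    ∃ C : ℝ, 0 < C ∧ ∀ N ≠ 0, ∀ x ∈ coordBox b N, ∀ i, (|b.repr (u + M * x) i| : ℤ) < C * N := by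
  set L := Algebra.leftMulMatrix b M
  refine ⟨1 + ∑ i, ((|b.repr u i| : ℤ) + ∑ j, (|L i j| : ℤ)), by positivity, fun N hN x hx i ↦ ?_⟩
  have hcoord : b.repr (u + M * x) i = b.repr u i + ∑ j, L i j * b.repr x j := by
    rw [map_add, Finsupp.add_apply, ← Algebra.leftMulMatrix_mulVec_repr]
    rfl
  have hi : |b.repr u i| + ∑ j, |L i j| ≤ ∑ i, (|b.repr u i| + ∑ j, |L i j|) :=
    Finset.single_le_sum (f := fun i ↦ |b.repr u i| + ∑ j, |L i j|) (fun _ _ ↦ by positivity)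
      (Finset.mem_univ i)
  have hN1 : (1 : ℤ) ≤ N := mod_cast Nat.one_le_iff_ne_zero.mpr hN
  have hle : |b.repr (u + M * x) i| ≤ (|b.repr u i| + ∑ j, |L i j|) * N := by
    rw [hcoord, add_mul, Finset.sum_mul]
    refine (abs_add_le _ _).trans (add_le_add (le_mul_of_one_le_right (abs_nonneg _) hN1) ?_)
    refine (Finset.abs_sum_le_sum_abs _ _).trans (Finset.sum_le_sum fun j _ ↦ ?_)
    obtain ⟨h0, hlt⟩ := mem_coordBox.mp hx j
    rw [abs_mul, abs_of_nonneg h0]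
    gcongr
  have hlt : |b.repr (u + M * x) i| < (1 + ∑ i, (|b.repr u i| + ∑ j, |L i j|)) * N := by
    nlinarith
  exact_mod_cast hlt

variable [IsDedekindDomain A] [Module.Free ℤ A]

theorem absNorm_lt_of_abs_repr_lt (b : Module.Basis ι ℤ A) {I : Ideal A} {x : A} (hx : x ∈ I)
    (hx0 : x ≠ 0) {y : ℝ} (hy : ∀ i, (|b.repr x i| : ℤ) < y) :
    (Ideal.absNorm I : ℝ) < ClassGroup.normBound .abs b * y ^ Fintype.card ι := by
  have := Module.Finite.of_basis b
  have hnorm : Algebra.norm ℤ x ≠ 0 := Algebra.norm_ne_zero_iff.mpr hx0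
  have hle : (Ideal.absNorm I : ℤ) ≤ |Algebra.norm ℤ x| :=
    Int.le_of_dvd (abs_pos.mpr hnorm) ((dvd_abs _ _).mpr (Ideal.absNorm_dvd_norm_of_mem hx))
  calc (Ideal.absNorm I : ℝ) ≤ (|Algebra.norm ℤ x| : ℤ) := mod_cast hle
    _ < _ := ClassGroup.norm_lt .abs b x hy

-- Cut the box into cells of side `l`: two points of `s` in one cell would differ by a nonzero
-- element of `I` of norm less than `N(I)`.
theorem card_le_of_normBound_mul_pow_le {I : Ideal A} {s : Finset A} (hs : s ⊆ coordBox b N)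
    (hsub : ∀ x ∈ s, ∀ y ∈ s, x - y ∈ I) {l : ℝ} (hl : 0 < l)
    (hlI : ClassGroup.normBound .abs b * l ^ Fintype.card ι ≤ Ideal.absNorm I) :
    (s.card : ℝ) ≤ (N / l + 1) ^ Fintype.card ι := by
  let cell (x : A) (i : ι) : ℕ := ⌊(b.repr x i : ℝ) / l⌋₊
  have hmaps : Set.MapsTo cell s (Fintype.piFinset fun _ : ι ↦ Finset.range (⌊N / l⌋₊ + 1)) := by
    intro x hx
    simp only [Finset.mem_coe, Fintype.mem_piFinset, Finset.mem_range, Nat.lt_succ_iff, cell]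
    intro i
    have : (b.repr x i : ℝ) ≤ N := mod_cast (mem_coordBox.mp (hs hx) i).2.le
    gcongr
  have hinj : Set.InjOn cell s := by
    intro x hx y hy hxy
    by_contra hne
    refine hlI.not_gt (absNorm_lt_of_abs_repr_lt b (hsub x hx y hy) (sub_ne_zero.mpr hne) ?_)
    intro i
    have hdiv {z : A} (hz : z ∈ s) : 0 ≤ (b.repr z i : ℝ) / l :=
      div_nonneg (mod_cast (mem_coordBox.mp (hs hz) i).1) hl.le
    have hfloor : ⌊(b.repr x i : ℝ) / l⌋ = ⌊(b.repr y i : ℝ) / l⌋ := by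
      rw [← Int.natCast_floor_eq_floor (hdiv hx), ← Int.natCast_floor_eq_floor (hdiv hy)]
      exact congrArg _ (congrFun hxy i)
    have := Int.abs_sub_lt_one_of_floor_eq_floor hfloor
    rw [← sub_div, abs_div, abs_of_pos hl, div_lt_one hl] at this
    simpa using this
  calc (s.card : ℝ) ≤ ((⌊N / l⌋₊ : ℝ) + 1) ^ Fintype.card ι := by
        exact_mod_cast (Finset.card_le_card_of_injOn cell hmaps hinj).trans (by simp)
    _ ≤ (N / l + 1) ^ Fintype.card ι := by
        gcongr
        exact Nat.floor_le (by positivity)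

theorem card_le_of_forall_sub_mem {I : Ideal A} (hI : I ≠ ⊥) {s : Finset A}
    (hs : s ⊆ coordBox b N) (hsub : ∀ x ∈ s, ∀ y ∈ s, x - y ∈ I) :
    (s.card : ℝ) ≤ 2 ^ (Fintype.card ι - 1) *
      (ClassGroup.normBound .abs b * N ^ Fintype.card ι / Ideal.absNorm I + 1) := by
  have := b.index_nonempty
  have := Module.Finite.of_basis b
  have hc : (0 : ℝ) < ClassGroup.normBound .abs b := mod_cast ClassGroup.normBound_pos .abs b
  have hI0 : (0 : ℝ) < Ideal.absNorm I :=
    mod_cast Nat.pos_of_ne_zero (mt Ideal.absNorm_eq_zero_iff.mp hI)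
  have hl := Real.rpow_inv_natCast_pow (div_pos hI0 hc).le (Fintype.card_ne_zero (α := ι))
  set l := (Ideal.absNorm I / ClassGroup.normBound .abs b : ℝ) ^ (Fintype.card ι : ℝ)⁻¹
  have hl0 : 0 < l := by positivity
  calc (s.card : ℝ) ≤ (N / l + 1) ^ Fintype.card ι := by
        refine card_le_of_normBound_mul_pow_le hs hsub hl0 ?_
        rw [hl, mul_div_cancel₀ _ hc.ne']
    _ ≤ 2 ^ (Fintype.card ι - 1) * ((N / l) ^ Fintype.card ι + 1 ^ Fintype.card ι) :=
        add_pow_le (by positivity) zero_le_one _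
    _ = _ := by
        rw [div_pow, hl, one_pow, div_div_eq_mul_div, mul_comm ((N : ℝ) ^ _)]

theorem exists_forall_absNorm_le_mul_pow (b : Module.Basis ι ℤ A) (u M : A) :
    ∃ C : ℝ, 0 < C ∧ ∀ N ≠ 0, ∀ x ∈ coordBox b N, u + M * x ≠ 0 → ∀ I : Ideal A,
      u + M * x ∈ I → (Ideal.absNorm I : ℝ) ≤ C * N ^ Fintype.card ι := by
  obtain ⟨C, hC, hlt⟩ := exists_forall_abs_repr_add_mul_lt b u M
  have hc : (0 : ℝ) < ClassGroup.normBound .abs b := mod_cast ClassGroup.normBound_pos .abs b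
  refine ⟨ClassGroup.normBound .abs b * C ^ Fintype.card ι, by positivity, ?_⟩
  intro N hN x hx hne I hI
  rw [mul_assoc, ← mul_pow]
  exact (absNorm_lt_of_abs_repr_lt b hI hne (hlt N hN x hx)).le

open scoped Classical in
theorem card_filter_add_mul_mem_pow_le {P : Ideal A} [P.IsPrime] (hP : P ≠ ⊥) {M : A} (hM : M ∉ P)
    (u : A) (e : ℕ) :
    (((coordBox b N).filter fun x ↦ u + M * x ∈ P ^ e).card : ℝ) ≤ 2 ^ (Fintype.card ι - 1) *
      (ClassGroup.normBound .abs b * N ^ Fintype.card ι / (Ideal.absNorm P : ℝ) ^ e + 1) := by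
  rw [← Nat.cast_pow (Ideal.absNorm P), ← map_pow]
  refine card_le_of_forall_sub_mem (pow_ne_zero e hP) (Finset.filter_subset _ _) fun x hx y hy ↦ ?_
  have hmul : M * (x - y) ∈ P ^ e := by
    simpa [mul_sub] using
      (P ^ e).sub_mem (Finset.mem_filter.mp hx).2 (Finset.mem_filter.mp hy).2
  exact (Ideal.IsPrime.mul_mem_pow P hmul).resolve_left hM

end Box

section SquareSieve

open Asymptotics Filter IsDedekindDomain

variable {K ι : Type*} [Field K] [NumberField K] [Fintype ι] [DecidableEq ι]
  (b : Module.Basis ι ℤ (𝓞 K))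

variable (K) in
theorem exists_finset_absNorm_sq_le (y : ℝ) :
    ∃ F : Finset (HeightOneSpectrum (𝓞 K)),
      (∀ v : HeightOneSpectrum (𝓞 K), (Ideal.absNorm v.asIdeal : ℝ) ^ 2 ≤ y → v ∈ F) ∧
      F.card ≤ Nat.card {I : Ideal (𝓞 K) // (Ideal.absNorm I : ℝ) ^ 2 ≤ y} := by
  have hfin : {I : Ideal (𝓞 K) | (Ideal.absNorm I : ℝ) ^ 2 ≤ y}.Finite := by
    refine (Ideal.finite_setOfPred_absNorm_le ⌊y⌋₊).subset fun I hI ↦ Nat.le_floor ?_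
    exact le_trans (mod_cast Nat.le_self_pow two_ne_zero _) hI
  refine ⟨hfin.toFinset.preimage _ HeightOneSpectrum.asIdeal_injective.injOn,
    fun v hv ↦ by simpa using hv, ?_⟩
  refine (Finset.card_le_card_of_injOn _ (fun v hv ↦ Finset.mem_preimage.mp hv)
    HeightOneSpectrum.asIdeal_injective.injOn).trans_eq (Set.ncard_eq_toFinset_card _ hfin).symm

open scoped Classical in
theorem card_filter_exists_mem_sq_le {M : 𝓞 K} (hM : M ≠ 0) (u : 𝓞 K)
    (E : Finset (HeightOneSpectrum (𝓞 K))) {N : ℕ} {y : ℝ}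
    (hy : ∀ x ∈ coordBox b N, u + M * x ≠ 0 → ∀ I : Ideal (𝓞 K),
      u + M * x ∈ I → (Ideal.absNorm I : ℝ) ≤ y) :
    ∃ F : Finset (HeightOneSpectrum (𝓞 K)), Disjoint F E ∧
      F.card ≤ Nat.card {I : Ideal (𝓞 K) // (Ideal.absNorm I : ℝ) ^ 2 ≤ y} ∧
      (((coordBox b N).filter fun x ↦
        ∃ v ∉ E, M ∉ v.asIdeal ∧ u + M * x ∈ v.asIdeal ^ 2).card : ℝ) ≤
      1 + ∑ v ∈ F, 2 ^ (Fintype.card ι - 1) * (ClassGroup.normBound .abs b *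
        N ^ Fintype.card ι / (Ideal.absNorm v.asIdeal : ℝ) ^ 2 + 1) := by
  obtain ⟨F, hF, hFcard⟩ := exists_finset_absNorm_sq_le K y
  set F' := F.filter fun v ↦ v ∉ E ∧ M ∉ v.asIdeal
  refine ⟨F', Finset.disjoint_left.mpr fun v hv ↦ (Finset.mem_filter.mp hv).2.1,
    (Finset.card_filter_le _ _).trans hFcard, ?_⟩
  set zeros := (coordBox b N).filter fun x ↦ u + M * x = 0
  let multiples (v : HeightOneSpectrum (𝓞 K)) :=
    (coordBox b N).filter fun x ↦ u + M * x ∈ v.asIdeal ^ 2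
  have hcover : ((coordBox b N).filter fun x ↦ ∃ v ∉ E, M ∉ v.asIdeal ∧
      u + M * x ∈ v.asIdeal ^ 2) ⊆ zeros ∪ F'.biUnion multiples := by
    intro x hx
    obtain ⟨hxN, v, hvE, hvM, hv⟩ := Finset.mem_filter.mp hx
    rw [Finset.mem_union, Finset.mem_biUnion]
    refine or_iff_not_imp_left.mpr fun hx0 ↦ ?_
    have hvy := hy x hxN (fun h ↦ hx0 (Finset.mem_filter.mpr ⟨hxN, h⟩)) _ hv
    rw [map_pow, Nat.cast_pow] at hvy
    exact ⟨v, Finset.mem_filter.mpr ⟨hF v hvy, hvE, hvM⟩, Finset.mem_filter.mpr ⟨hxN, hv⟩⟩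
  have hzeros : zeros.card ≤ 1 := Finset.card_le_one.mpr fun x hx y hy ↦
    mul_left_cancel₀ hM <| add_left_cancel <|
      (Finset.mem_filter.mp hx).2.trans (Finset.mem_filter.mp hy).2.symm
  calc _ ≤ (1 : ℝ) + ∑ v ∈ F', ((multiples v).card : ℝ) := by
        exact_mod_cast (Finset.card_le_card hcover).trans <| (Finset.card_union_le _ _).trans <|
          add_le_add hzeros Finset.card_biUnion_le
    _ ≤ _ := by
        gcongr with v hv
        exact card_filter_add_mul_mem_pow_le v.ne_bot (Finset.mem_filter.mp hv).2.2 u 2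

variable (K) in
theorem summable_inv_absNorm_sq :
    Summable fun v : HeightOneSpectrum (𝓞 K) ↦ ((Ideal.absNorm v.asIdeal : ℝ) ^ 2)⁻¹ := by
  refine ((summable_absNorm_rpow K one_lt_two).comp_injective
    HeightOneSpectrum.asIdeal_injective).congr fun v ↦ ?_
  rw [Function.comp_apply, Real.rpow_neg (Nat.cast_nonneg _), Real.rpow_two]

open scoped Classical in
theorem exists_finset_eventually_card_le {ε : ℝ} (hε : 0 < ε) :
    ∃ E : Finset (HeightOneSpectrum (𝓞 K)), ∀ M ≠ 0, ∀ u : 𝓞 K, ∀ᶠ N : ℕ in atTop,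
      (((coordBox b N).filter fun x ↦
        ∃ v ∉ E, M ∉ v.asIdeal ∧ u + M * x ∈ v.asIdeal ^ 2).card : ℝ) ≤
      ε * N ^ Fintype.card ι := by
  have := b.index_nonempty
  set d := Fintype.card ι
  set c : ℝ := Int.cast (ClassGroup.normBound .abs b)
  have hc : 0 < c := Int.cast_pos.mpr (ClassGroup.normBound_pos .abs b)
  obtain ⟨E, hE⟩ := summable_iff_vanishing_norm.mp (summable_inv_absNorm_sq K)
    (ε / 2 / (2 ^ (d - 1) * c)) (by positivity)
  refine ⟨E, fun M hM u ↦ ?_⟩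
  obtain ⟨C, hC, hnorm⟩ := exists_forall_absNorm_le_mul_pow b u M
  let idealCount (y : ℝ) : ℝ := Nat.card {I : Ideal (𝓞 K) // (Ideal.absNorm I : ℝ) ^ 2 ≤ y}
  have hpow : Tendsto (fun N : ℕ ↦ (N : ℝ) ^ d) atTop atTop :=
    (tendsto_pow_atTop Fintype.card_ne_zero).comp tendsto_natCast_atTop_atTop
  have herror : (fun N : ℕ ↦ 1 + 2 ^ (d - 1) * idealCount (C * N ^ d)) =o[atTop]
      fun N : ℕ ↦ (N : ℝ) ^ d := by
    have hcount := (card_absNorm_sq_le_isLittleO K).comp_tendsto (hpow.const_mul_atTop hC)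
    exact ((isLittleO_const_left.mpr (.inr (tendsto_norm_atTop_atTop.comp hpow)))).add
      ((hcount.trans_isBigO (isBigO_const_mul_self C _ _)).const_mul_left _)
  filter_upwards [herror.def (half_pos hε), eventually_ne_atTop 0] with N hN hN0
  obtain ⟨F, hFE, hFcard, hle⟩ := card_filter_exists_mem_sq_le b hM u E (hnorm N hN0)
  have hNd : ‖(N : ℝ) ^ d‖ = (N : ℝ) ^ d := Real.norm_of_nonneg (by positivity)
  have htail : ∑ v ∈ F, ((Ideal.absNorm v.asIdeal : ℝ) ^ 2)⁻¹ ≤ ε / 2 / (2 ^ (d - 1) * c) :=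
    (le_abs_self _).trans (hE F hFE).le
  calc _ ≤ _ := hle
    _ = 2 ^ (d - 1) * c * N ^ d * ∑ v ∈ F, ((Ideal.absNorm v.asIdeal : ℝ) ^ 2)⁻¹ +
        (1 + 2 ^ (d - 1) * F.card) := by
      rw [← Finset.mul_sum, Finset.sum_add_distrib, Finset.sum_const, nsmul_one, Finset.mul_sum]
      simp only [div_eq_mul_inv, ← Finset.mul_sum]
      ring
    _ ≤ 2 ^ (d - 1) * c * N ^ d * (ε / 2 / (2 ^ (d - 1) * c)) +
        (1 + 2 ^ (d - 1) * idealCount (C * N ^ d)) := by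
      gcongr
      exact Nat.cast_le.mpr hFcard
    _ ≤ ε / 2 * N ^ d + ε / 2 * N ^ d := by
      refine add_le_add (le_of_eq (by field_simp)) ?_
      exact (le_abs_self _).trans (hN.trans_eq (by rw [hNd]))
    _ = ε * N ^ d := by ring

theorem exists_forall_add_mul_sub_notMem_sq (T : Finset (𝓞 K)) :
    ∃ E : Finset (HeightOneSpectrum (𝓞 K)), ∀ M ≠ 0, (∀ v ∈ E, M ∈ v.asIdeal) → ∀ a : 𝓞 K,
      ∃ z, ∀ v : HeightOneSpectrum (𝓞 K), M ∉ v.asIdeal →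
        ∀ t ∈ T, a + M * z - t ∉ v.asIdeal ^ 2 := by
  classical
  let b := RingOfIntegers.basis K
  obtain ⟨E, hE⟩ := exists_finset_eventually_card_le b (ε := 1 / (T.card + 1)) (by positivity)
  refine ⟨E, fun M hM hME a ↦ ?_⟩
  let bad (N : ℕ) (t : 𝓞 K) := (coordBox b N).filter fun x ↦
    ∃ v ∉ E, M ∉ v.asIdeal ∧ a - t + M * x ∈ v.asIdeal ^ 2
  obtain ⟨N, hbad, hN⟩ := (((eventually_all_finset T).mpr fun t _ ↦ hE M hM (a - t)).and
    (eventually_gt_atTop 0)).exists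
  have hcard : (T.biUnion (bad N)).card < (coordBox b N).card := by
    rw [card_coordBox, ← Nat.cast_lt (α := ℝ), Nat.cast_pow]
    calc ((T.biUnion (bad N)).card : ℝ) ≤ ∑ t ∈ T, ((bad N t).card : ℝ) :=
          mod_cast Finset.card_biUnion_le
      _ ≤ T.card • (1 / (T.card + 1) * (N : ℝ) ^ _) := Finset.sum_le_card_nsmul _ _ _ hbad
      _ = T.card / (T.card + 1) * (N : ℝ) ^ _ := by rw [nsmul_eq_mul]; ring
      _ < (N : ℝ) ^ _ := by
          refine mul_lt_of_lt_one_left (by positivity) ?_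
          rw [div_lt_one (by positivity)]
          exact lt_add_one _
  obtain ⟨z, hz, hzbad⟩ := Finset.exists_mem_notMem_of_card_lt_card hcard
  refine ⟨z, fun v hv t ht hmem ↦ hzbad (Finset.mem_biUnion.mpr ⟨t, ht, ?_⟩)⟩
  rw [add_sub_right_comm] at hmem
  exact Finset.mem_filter.mpr ⟨hz, v, fun hvE ↦ hv (hME v hvE), hv, hmem⟩

theorem exists_sub_mem_pow_and_sub_notMem_sq (T : Finset (𝓞 K))
    (Ω : Finset (HeightOneSpectrum (𝓞 K))) (k : HeightOneSpectrum (𝓞 K) → ℕ)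
    (w : HeightOneSpectrum (𝓞 K) → 𝓞 K) :
    ∃ (W : Finset (HeightOneSpectrum (𝓞 K))) (y : 𝓞 K), Ω ⊆ W ∧
      (∀ v ∈ W, y - w v ∈ v.asIdeal ^ k v) ∧ ∀ v ∉ W, ∀ t ∈ T, y - t ∉ v.asIdeal ^ 2 := by
  classical
  obtain ⟨E, hE⟩ := exists_forall_add_mul_sub_notMem_sq T
  obtain ⟨M₀, hM₀mem, hM₀⟩ := Submodule.exists_mem_ne_zero_of_ne_bot
    (p := ∏ v ∈ Ω ∪ E, v.asIdeal) (Finset.prod_ne_zero_iff.mpr fun v _ ↦ v.ne_bot)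
  have hM₀v : ∀ v ∈ Ω ∪ E, M₀ ∈ v.asIdeal := fun v hv ↦
    Ideal.le_of_dvd (Finset.dvd_prod_of_mem _ hv) hM₀mem
  let W := (Ring.HasFiniteQuotients.finite_setOfPred_mem M₀ hM₀).toFinset.preimage _
    (HeightOneSpectrum.asIdeal_injective (R := 𝓞 K)).injOn
  have hW (v : HeightOneSpectrum (𝓞 K)) : v ∈ W ↔ M₀ ∈ v.asIdeal := by simp [W]
  obtain ⟨a, ha⟩ := IsDedekindDomain.exists_forall_sub_mem_ideal (s := W)
    (fun v ↦ v.asIdeal) k (fun v _ ↦ v.prime)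
    (fun v _ v' _ hne ↦ HeightOneSpectrum.asIdeal_injective.ne hne) (fun v ↦ w v)
  set M := M₀ ^ (W.sup k + 1) with hM
  have hMv (v : HeightOneSpectrum (𝓞 K)) : M ∈ v.asIdeal ↔ v ∈ W := by
    rw [hW, hM, v.isPrime.pow_mem_iff_mem _ (Nat.succ_pos _)]
  have hMpow : ∀ v ∈ W, M ∈ v.asIdeal ^ k v := fun v hv ↦
    Ideal.pow_le_pow_right ((Finset.le_sup hv).trans (Nat.le_succ _))
      (Ideal.pow_mem_pow ((hW v).mp hv) _)
  obtain ⟨z, hz⟩ := hE M (pow_ne_zero _ hM₀)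
    (fun v hv ↦ (hMv v).mpr ((hW v).mpr (hM₀v v (Finset.mem_union_right _ hv)))) a
  refine ⟨W, a + M * z, fun v hv ↦ (hW v).mpr (hM₀v v (Finset.mem_union_left _ hv)),
    fun v hv ↦ ?_, fun v hv ↦ hz v (mt (hMv v).mp hv)⟩
  rw [add_sub_right_comm]
  exact add_mem (ha v hv) (Ideal.mul_mem_right _ _ (hMpow v hv))

end SquareSieve

theorem ResidueSieve.exists_not_mem {K : Type*} [Field K] [NumberField K] (S : ResidueSieve K)
    {P : Ideal (𝓞 K)} (h : S.R P ≠ Set.univ) : ∃ x, ¬ S.Mem P x := by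
  obtain ⟨r, hr⟩ := (Set.ne_univ_iff_exists_notMem _).mp h
  obtain ⟨x, rfl⟩ := Ideal.Quotient.mk_surjective r
  exact ⟨x, hr⟩

theorem ResidueSieve.mem_congr {K : Type*} [Field K] [NumberField K] (S : ResidueSieve K)
    {P : Ideal (𝓞 K)} {x y : 𝓞 K} (h : x - y ∈ P ^ S.k P) : S.Mem P x ↔ S.Mem P y := by
  rw [ResidueSieve.Mem, ResidueSieve.Mem, Ideal.Quotient.eq.mpr h]

/-- Strong approximation for sieves: if all excluded residue classes are concentrated
near a fixed finite set `T` modulo squares of primes, and no sieve set is everything,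
then every finite system of admissible congruence conditions is realized by an element
of `V(K,R)`. -/
theorem sieve_strong_approximation {K : Type*} [Field K] [NumberField K]
    (S : ResidueSieve K) (T : Finset (𝓞 K))
    (hT : ∀ P : Ideal (𝓞 K), P.IsPrime → P ≠ ⊥ →
      ∀ x : 𝓞 K, S.Mem P x → ∃ t ∈ T, x - t ∈ P ^ 2)
    (hne : ∀ P : Ideal (𝓞 K), P.IsPrime → P ≠ ⊥ → S.R P ≠ Set.univ) :
    ∀ Ω : Finset (Ideal (𝓞 K)), (∀ P ∈ Ω, P.IsPrime ∧ P ≠ ⊥) →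
      ∀ m : ℕ, ∀ x : Ideal (𝓞 K) → 𝓞 K, (∀ P ∈ Ω, ¬ S.Mem P (x P)) →
        ∃ y ∈ S.V, ∀ P ∈ Ω, y - x P ∈ P ^ m := by
  intro Ω hΩ m x hx
  have hlocal (v : IsDedekindDomain.HeightOneSpectrum (𝓞 K)) :
      ∃ w, ¬ S.Mem v.asIdeal w ∧ (v.asIdeal ∈ Ω → w = x v.asIdeal) := by
    by_cases hv : v.asIdeal ∈ Ω
    · exact ⟨x v.asIdeal, hx _ hv, fun _ ↦ rfl⟩
    · obtain ⟨w, hw⟩ := S.exists_not_mem (hne _ v.isPrime v.ne_bot)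
      exact ⟨w, hw, fun h ↦ absurd h hv⟩
  choose w hw hwx using hlocal
  obtain ⟨W, y, hΩW, hyW, hyT⟩ := exists_sub_mem_pow_and_sub_notMem_sq T
    (Ω.preimage _ IsDedekindDomain.HeightOneSpectrum.asIdeal_injective.injOn)
    (fun v ↦ max m (S.k v.asIdeal)) w
  refine ⟨y, fun P hP hP0 hmem ↦ ?_, fun P hPΩ ↦ ?_⟩
  · by_cases hPW : ⟨P, hP, hP0⟩ ∈ W
    · have hcongr := Ideal.pow_le_pow_right (le_max_right _ _) (hyW _ hPW)
      exact hw _ ((S.mem_congr hcongr).mp hmem)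
    · obtain ⟨t, ht, hsq⟩ := hT P hP hP0 y hmem
      exact hyT _ hPW t ht hsq
  · let v : IsDedekindDomain.HeightOneSpectrum (𝓞 K) := ⟨P, (hΩ P hPΩ).1, (hΩ P hPΩ).2⟩
    have hyv := hyW v (hΩW (Finset.mem_preimage.mpr hPΩ))
    rw [hwx v hPΩ] at hyv
    exact Ideal.pow_le_pow_right (le_max_left _ _) hyv
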